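/- arXiv:1905.08670 — 2 statements merged into one kernel-verified Lean document; each statement's English description precedes it below -/
import Mathlib

section
/- Let D be a finite digraph and let v be a vertex of D. Then adi(D) − 1 ≤ adi(D − v) ≤ adi(D), where D − v is the digraph obtained from D by deleting v. Consequently, if D₁ is an induced subdigraph of D₂, then adi(D₁) ≤ adi(D₂). -/
open Function

section Defs

variable {V : Type*}

/-- The vertex set `S` contains a directed cycle of the digraph `D`, i.e. there is a
closed directed walk of positive length all of whose vertices lie in `S`. -/
def HasDicycle (D : V → V → Prop) (S : Set V) : Prop :=
  ∃ v, Relation.TransGen (fun a b => a ∈ S ∧ b ∈ S ∧ D a b) v v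

/-- A coloring of the vertices of the digraph `D` with `k` colors all of whose color
classes are acyclic. -/
def IsAcyclicColoring (D : V → V → Prop) {k : ℕ} (c : V → Fin k) : Prop :=
  ∀ i, ¬ HasDicycle D (c ⁻¹' {i})

/-- A complete acyclic coloring of the digraph `D` with exactly `k` colors: every color is
used, every color class is acyclic, and the union of any two distinct color classes
contains a directed cycle. -/
def IsCompleteAcyclicColoring (D : V → V → Prop) {k : ℕ} (c : V → Fin k) : Prop :=
  Surjective c ∧ IsAcyclicColoring D c ∧
    ∀ i j : Fin k, i ≠ j → HasDicycle D (c ⁻¹' {i} ∪ c ⁻¹' {j})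

/-- The dichromatic number: the minimum number of colors in an acyclic coloring. -/
noncomputable def dichromaticNumber (D : V → V → Prop) : ℕ :=
  sInf {k | ∃ c : V → Fin k, IsAcyclicColoring D c}

/-- The adichromatic number: the maximum number of colors in a complete acyclic coloring. -/
noncomputable def adichromaticNumber (D : V → V → Prop) : ℕ :=
  sSup {k | ∃ c : V → Fin k, IsCompleteAcyclicColoring D c}

/-- A coloring of the vertices of the graph `G` all of whose color classes induce forests. -/
def IsArborealColoring (G : SimpleGraph V) {k : ℕ} (c : V → Fin k) : Prop :=
  ∀ i, (G.induce (c ⁻¹' {i})).IsAcyclic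

/-- A complete arboreal coloring of `G` with exactly `k` colors: every color is used, every
color class induces a forest, and the union of any two distinct color classes contains a
cycle. -/
def IsCompleteArborealColoring (G : SimpleGraph V) {k : ℕ} (c : V → Fin k) : Prop :=
  Surjective c ∧ IsArborealColoring G c ∧
    ∀ i j : Fin k, i ≠ j → ¬ (G.induce (c ⁻¹' {i} ∪ c ⁻¹' {j})).IsAcyclic

/-- The vertex arboricity: the minimum number of colors in an arboreal coloring. -/
noncomputable def vertexArboricity (G : SimpleGraph V) : ℕ :=
  sInf {k | ∃ c : V → Fin k, IsArborealColoring G c}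

/-- The a-vertex arboricity: the maximum number of colors in a complete arboreal coloring. -/
noncomputable def avertexArboricity (G : SimpleGraph V) : ℕ :=
  sSup {k | ∃ c : V → Fin k, IsCompleteArborealColoring G c}

/-- The minimum size of a directed feedback vertex set of the digraph `D`. -/
noncomputable def digraphFVSNumber [Fintype V] (D : V → V → Prop) : ℕ :=
  sInf {n | ∃ F : Finset V, F.card = n ∧ ¬ HasDicycle D ((↑F : Set V)ᶜ)}

/-- The minimum size of a feedback vertex set of the graph `G`. -/
noncomputable def graphFVSNumber [Fintype V] (G : SimpleGraph V) : ℕ :=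
  sInf {n | ∃ F : Finset V, F.card = n ∧ (G.induce ((↑F : Set V)ᶜ)).IsAcyclic}

/-- A complete coloring in the sense of the diachromatic number: all classes are acyclic
and for every ordered pair `(i, j)` of distinct colors there is an arc with tail colored
`j` and head colored `i`. -/
def IsCompleteDiColoring (D : V → V → Prop) {k : ℕ} (c : V → Fin k) : Prop :=
  Surjective c ∧ IsAcyclicColoring D c ∧
    ∀ i j : Fin k, i ≠ j → ∃ u v, D u v ∧ c u = j ∧ c v = i

/-- The diachromatic number of the digraph `D`. -/
noncomputable def diachromaticNumber (D : V → V → Prop) : ℕ :=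
  sSup {k | ∃ c : V → Fin k, IsCompleteDiColoring D c}

/-- A complete proper coloring of the graph `G`: proper, surjective, and any two distinct
colors appear together on some edge. -/
def IsCompleteProperColoring (G : SimpleGraph V) {k : ℕ} (c : V → Fin k) : Prop :=
  Surjective c ∧ (∀ u v, G.Adj u v → c u ≠ c v) ∧
    ∀ i j : Fin k, i ≠ j → ∃ u v, G.Adj u v ∧ c u = i ∧ c v = j

/-- The achromatic number: the maximum number of colors in a complete proper coloring. -/
noncomputable def achromaticNumber (G : SimpleGraph V) : ℕ :=
  sSup {k | ∃ c : V → Fin k, IsCompleteProperColoring G c}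

/-- The subdigraph of `D` induced by the vertex set `S`. -/
def induceDigraph (D : V → V → Prop) (S : Set V) : S → S → Prop :=
  fun a b => D a.1 b.1

/-- `D` is an orientation of the simple graph `G`: every arc of `D` is an edge of `G`, and
every edge of `G` is given exactly one of its two possible directions. -/
def IsOrientation (G : SimpleGraph V) (D : V → V → Prop) : Prop :=
  (∀ u v, D u v → G.Adj u v) ∧ ∀ u v, G.Adj u v → Xor' (D u v) (D v u)

end Defs

def PartColoring {V : Type*} (D : V → V → Prop) (T : Set V) (k : ℕ) (c : V → ℕ) : Prop :=
  (∀ x ∈ T, c x < k) ∧ (∀ i < k, ∃ x ∈ T, c x = i) ∧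
  (∀ i < k, ¬ HasDicycle D {x | x ∈ T ∧ c x = i}) ∧
  ∀ i < k, ∀ j < k, i ≠ j → HasDicycle D {x | x ∈ T ∧ (c x = i ∨ c x = j)}

theorem HasDicycle.mono' {V : Type*} {D : V → V → Prop} {S T : Set V} (h : S ⊆ T)
    (hS : HasDicycle D S) : HasDicycle D T := by
  obtain ⟨v, hv⟩ := hS
  exact ⟨v, hv.lift id fun a b ⟨h1, h2, h3⟩ => ⟨h h1, h h2, h3⟩⟩

theorem hasDicycle_image {V W : Type*} (D : V → V → Prop) (f : W → V) (hf : Injective f)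
    (A : Set W) : HasDicycle (fun a b => D (f a) (f b)) A ↔ HasDicycle D (f '' A) := by
  constructor
  · rintro ⟨v, hv⟩
    exact ⟨f v, hv.lift f fun a b ⟨h1, h2, h3⟩ => ⟨⟨a, h1, rfl⟩, ⟨b, h2, rfl⟩, h3⟩⟩
  · rintro ⟨v, hv⟩
    have key : ∀ x y, Relation.TransGen (fun a b => a ∈ f '' A ∧ b ∈ f '' A ∧ D a b) x y →
        ∃ a b, f a = x ∧ f b = y ∧
          Relation.TransGen (fun a b => a ∈ A ∧ b ∈ A ∧ D (f a) (f b)) a b := by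
      intro x y h
      induction h with
      | single h =>
        obtain ⟨⟨a, ha, rfl⟩, ⟨b, hb, rfl⟩, h⟩ := h
        exact ⟨a, b, rfl, rfl, .single ⟨ha, hb, h⟩⟩
      | tail _ h ih =>
        obtain ⟨⟨a, ha, rfl⟩, ⟨b, hb, rfl⟩, h⟩ := h
        obtain ⟨p, q, hp, hq, hpq⟩ := ih
        obtain rfl := hf hq
        exact ⟨p, b, hp, rfl, hpq.tail ⟨ha, hb, h⟩⟩
    obtain ⟨a, b, ha, hb, hab⟩ := key v v hv
    obtain rfl : a = b := hf (ha.trans hb.symm)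
    exact ⟨a, hab⟩

theorem bridge {V W : Type*} (D : V → V → Prop) (f : W → V) (hf : Injective f) (k : ℕ) :
    (∃ c : W → Fin k, IsCompleteAcyclicColoring (fun a b => D (f a) (f b)) c) ↔
      ∃ c, PartColoring D (Set.range f) k c := by
  constructor
  · rintro ⟨c, h1, h2, h3⟩
    have he : ∀ w, Function.extend f (fun w => (c w).val) 0 (f w) = c w :=
      fun w => hf.extend_apply _ _ w
    refine ⟨Function.extend f (fun w => (c w).val) 0, ?_, ?_, ?_, ?_⟩
    · rintro _ ⟨w, rfl⟩
      rw [he]; exact (c w).2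
    · intro i hi
      obtain ⟨w, hw⟩ := h1 ⟨i, hi⟩
      exact ⟨f w, ⟨w, rfl⟩, by rw [he, hw]⟩
    · intro i hi h
      apply h2 ⟨i, hi⟩
      rw [hasDicycle_image D f hf]
      refine h.mono' ?_
      rintro _ ⟨⟨w, rfl⟩, hw⟩
      rw [he] at hw
      exact ⟨w, Fin.ext hw, rfl⟩
    · intro i hi j hj hij
      have := h3 ⟨i, hi⟩ ⟨j, hj⟩ (by simpa using hij)
      rw [hasDicycle_image D f hf] at this
      refine this.mono' ?_
      rintro _ ⟨w, hw, rfl⟩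
      refine ⟨⟨w, rfl⟩, ?_⟩
      rw [he]
      rcases hw with hw | hw
      · left; exact congrArg Fin.val hw
      · right; exact congrArg Fin.val hw
  · rintro ⟨c, h0, h1, h2, h3⟩
    refine ⟨fun w => ⟨c (f w), h0 _ ⟨w, rfl⟩⟩, ?_, ?_, ?_⟩
    · rintro ⟨i, hi⟩
      obtain ⟨_, ⟨w, rfl⟩, hw⟩ := h1 i hi
      exact ⟨w, Fin.ext hw⟩
    · rintro ⟨i, hi⟩ h
      apply h2 i hi
      rw [hasDicycle_image D f hf] at h
      refine h.mono' ?_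
      rintro _ ⟨w, hw, rfl⟩
      exact ⟨⟨w, rfl⟩, congrArg Fin.val hw⟩
    · rintro ⟨i, hi⟩ ⟨j, hj⟩ hij
      rw [hasDicycle_image D f hf]
      refine (h3 i hi j hj (by simpa using hij)).mono' ?_
      rintro _ ⟨⟨w, rfl⟩, hw⟩
      refine ⟨w, ?_, rfl⟩
      rcases hw with hw | hw
      · left; exact Fin.ext hw
      · right; exact Fin.ext hw

theorem insert_coloring {V : Type*} (D : V → V → Prop) (hD : ∀ x, ¬ D x x) (T : Set V) (v : V)
    (k : ℕ) (h : ∃ c, PartColoring D T k c) :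
    ∃ k' ≥ k, ∃ c, PartColoring D (insert v T) k' c := by
  classical
  by_cases hv : v ∈ T
  · rw [Set.insert_eq_of_mem hv]; exact ⟨k, le_rfl, h⟩
  obtain ⟨c, h0, h1, h2, h3⟩ := h
  have hne : ∀ x ∈ T, x ≠ v := fun x hx e => hv (e ▸ hx)
  by_cases hi : ∃ i < k, ¬ HasDicycle D (insert v {x | x ∈ T ∧ c x = i})
  · obtain ⟨i, hik, hi⟩ := hi
    refine ⟨k, le_rfl, Function.update c v i, ?_, ?_, ?_, ?_⟩
    · rintro x (rfl | hx)
      · simpa using hik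
      · simpa [hne x hx] using h0 x hx
    · intro j hj
      obtain ⟨x, hx, hxj⟩ := h1 j hj
      exact ⟨x, Or.inr hx, by simpa [hne x hx] using hxj⟩
    · intro j hj hc
      by_cases hij : i = j
      · subst hij
        apply hi
        refine hc.mono' ?_
        rintro x ⟨rfl | hx, hxi⟩
        · exact Or.inl rfl
        · exact Or.inr ⟨hx, by simpa [hne x hx] using hxi⟩
      · apply h2 j hj
        refine hc.mono' ?_
        rintro x ⟨rfl | hx, hxi⟩
        · exact absurd (by simpa using hxi) hij
        · exact ⟨hx, by simpa [hne x hx] using hxi⟩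
    · intro a ha b hb hab
      refine (h3 a ha b hb hab).mono' ?_
      rintro x ⟨hx, hxi⟩
      exact ⟨Or.inr hx, by simpa [hne x hx] using hxi⟩
  · push Not at hi
    have hup : ∀ x ∈ T, Function.update c v k x = c x := fun x hx => by simp [hne x hx]
    have hnew : ∀ i < k, ∀ S : Set V, (∀ x ∈ T, c x = i → x ∈ S) → v ∈ S → HasDicycle D S := by
      intro i hik S hS hvS
      refine (hi i hik).mono' ?_
      rintro x (rfl | ⟨hx, hxi⟩)
      · exact hvS
      · exact hS x hx hxi
    refine ⟨k + 1, by omega, Function.update c v k, ?_, ?_, ?_, ?_⟩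
    · rintro x (rfl | hx)
      · simp
      · rw [hup x hx]; have := h0 x hx; omega
    · intro j hj
      by_cases hjk : j = k
      · exact ⟨v, Or.inl rfl, by simp [hjk]⟩
      · obtain ⟨x, hx, hxj⟩ := h1 j (by omega)
        exact ⟨x, Or.inr hx, by rw [hup x hx, hxj]⟩
    · intro j hj hc
      by_cases hjk : j = k
      · subst hjk
        have hc' : HasDicycle D {v} := by
          refine hc.mono' ?_
          rintro x ⟨rfl | hx, hxi⟩
          · rfl
          · rw [hup x hx] at hxi
            have := h0 x hx; omega
        obtain ⟨w, hw⟩ := hc'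
        obtain ⟨u, ⟨h1, h2, h3⟩, -⟩ := Relation.TransGen.head'_iff.1 hw
        rw [Set.mem_singleton_iff] at h1 h2
        subst h1; subst h2
        exact hD _ h3
      · apply h2 j (by omega)
        refine hc.mono' ?_
        rintro x ⟨rfl | hx, hxi⟩
        · exact absurd (by simpa using hxi.symm) hjk
        · exact ⟨hx, by rwa [hup x hx] at hxi⟩
    · intro a ha b hb hab
      by_cases hak : a = k
      · refine hnew b (by omega) _ ?_ ⟨Or.inl rfl, by simp [hak]⟩
        intro x hx hxb
        exact ⟨Or.inr hx, by rw [hup x hx]; exact Or.inr hxb⟩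
      by_cases hbk : b = k
      · refine hnew a (by omega) _ ?_ ⟨Or.inl rfl, by simp [hbk]⟩
        intro x hx hxb
        exact ⟨Or.inr hx, by rw [hup x hx]; exact Or.inl hxb⟩
      refine (h3 a (by omega) b (by omega) hab).mono' ?_
      rintro x ⟨hx, hxi⟩
      exact ⟨Or.inr hx, by rwa [hup x hx]⟩

theorem extend_coloring {V : Type*} [Finite V] (D : V → V → Prop) (hD : ∀ x, ¬ D x x)
    (S T : Set V) (hST : S ⊆ T) (k : ℕ) (h : ∃ c, PartColoring D S k c) :
    ∃ k' ≥ k, ∃ c, PartColoring D T k' c := by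
  have key : ∀ F : Set V, ∃ k' ≥ k, ∃ c, PartColoring D (F ∪ S) k' c := by
    intro F
    induction F, F.toFinite using Set.Finite.induction_on with
    | empty => exact ⟨k, le_rfl, by simpa using h⟩
    | insert _ _ ih =>
      obtain ⟨k1, hk1, h1⟩ := ih
      obtain ⟨k2, hk2, h2⟩ := insert_coloring D hD _ _ k1 h1
      rw [← Set.insert_union] at h2
      exact ⟨k2, by omega, h2⟩
  simpa [Set.union_eq_left.2 hST] using key T

theorem delete_class {V : Type*} (D : V → V → Prop) (v : V) (k : ℕ)
    (h : ∃ c, PartColoring D Set.univ k c) :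
    ∃ S : Set V, S ⊆ {v}ᶜ ∧ ∃ c, PartColoring D S (k - 1) c := by
  obtain ⟨c, h0, h1, h2, h3⟩ := h
  have hv := h0 v trivial
  set e := Equiv.swap (c v) (k - 1) with he
  have hlt : ∀ i < k - 1, e i < k ∧ e i ≠ c v := by
    intro i hi
    rw [he, Equiv.swap_apply_def]
    split_ifs <;> omega
  have hee : ∀ i, e (e i) = i := fun i => by simp [he]
  have hiff : ∀ x i, e (c x) = i ↔ c x = e i := fun x i =>
    ⟨fun h => by rw [← h, hee], fun h => by rw [h, hee]⟩
  refine ⟨{x | c x ≠ c v}, fun x hx hxv => hx (by rw [hxv]), fun x => e (c x), ?_, ?_, ?_, ?_⟩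
  · intro x hx
    have := h0 x trivial
    have hx : c x ≠ c v := hx
    change e (c x) < k - 1
    rw [he, Equiv.swap_apply_def]
    split_ifs <;> omega
  · intro i hi
    obtain ⟨x, -, hx⟩ := h1 (e i) (hlt i hi).1
    exact ⟨x, by rw [Set.mem_setOf_eq, hx]; exact (hlt i hi).2, (hiff _ _).2 hx⟩
  · intro i hi hc
    apply h2 (e i) (hlt i hi).1
    refine hc.mono' ?_
    rintro x ⟨-, hx⟩
    exact ⟨trivial, (hiff _ _).1 hx⟩
  · intro i hi j hj hij
    refine (h3 (e i) (hlt i hi).1 (e j) (hlt j hj).1 (e.injective.ne hij)).mono' ?_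
    rintro x ⟨-, hx⟩
    refine ⟨?_, hx.imp (hiff _ _).2 (hiff _ _).2⟩
    rw [Set.mem_setOf_eq]
    rcases hx with hx | hx <;> rw [hx]
    · exact (hlt i hi).2
    · exact (hlt j hj).2

theorem le_adi {V : Type*} [Finite V] (D : V → V → Prop) (k : ℕ)
    (h : ∃ c : V → Fin k, IsCompleteAcyclicColoring D c) : k ≤ adichromaticNumber D := by
  refine le_csSup ⟨Nat.card V, ?_⟩ h
  rintro n ⟨c, hc, -⟩
  simpa using Nat.card_le_card_of_surjective c hc

theorem bridge_univ {V : Type*} (D : V → V → Prop) (k : ℕ) :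
    (∃ c : V → Fin k, IsCompleteAcyclicColoring D c) ↔ ∃ c, PartColoring D Set.univ k c := by
  have := bridge D id injective_id k
  rwa [Set.range_id] at this

theorem bridge_induce {V : Type*} (D : V → V → Prop) (S : Set V) (k : ℕ) :
    (∃ c : S → Fin k, IsCompleteAcyclicColoring (induceDigraph D S) c) ↔
      ∃ c, PartColoring D S k c := by
  have := bridge D (Subtype.val : S → V) Subtype.val_injective k
  rwa [Subtype.range_coe] at this

theorem adi_mono {V : Type*} [Finite V] (D : V → V → Prop) (hD : ∀ x, ¬ D x x) (S : Set V) :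
    adichromaticNumber (induceDigraph D S) ≤ adichromaticNumber D := by
  refine csSup_le' ?_
  intro k hk
  obtain ⟨k', hk', h⟩ := extend_coloring D hD S Set.univ (Set.subset_univ _) k
    ((bridge_induce D S k).1 hk)
  exact le_trans hk' (le_adi D k' ((bridge_univ D k').2 h))

theorem adi_delete {V : Type*} [Finite V] (D : V → V → Prop) (hD : ∀ x, ¬ D x x) (v : V) :
    adichromaticNumber D - 1 ≤ adichromaticNumber (induceDigraph D ({v}ᶜ : Set V)) := by
  rw [Nat.sub_le_iff_le_add]
  refine csSup_le' ?_
  intro k hk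
  obtain ⟨S, hS, h⟩ := delete_class D v k ((bridge_univ D k).1 hk)
  obtain ⟨k', hk', h'⟩ := extend_coloring D hD S _ hS _ h
  have := le_adi _ k' ((bridge_induce D _ k').2 h')
  omega

/-- for any vertex `v` of a finite digraph `D`,
`adi(D) − 1 ≤ adi(D − v) ≤ adi(D)`; consequently the adichromatic number is monotone
under induced subdigraphs. -/
theorem adichromatic_vertex_deletion :
    (∀ (V : Type) [Fintype V] (D : V → V → Prop), Irreflexive D → ∀ v : V,
      adichromaticNumber D - 1 ≤ adichromaticNumber (induceDigraph D ({v}ᶜ : Set V)) ∧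
      adichromaticNumber (induceDigraph D ({v}ᶜ : Set V)) ≤ adichromaticNumber D) ∧
    (∀ (V : Type) [Fintype V] (D : V → V → Prop), Irreflexive D → ∀ S : Set V,
      adichromaticNumber (induceDigraph D S) ≤ adichromaticNumber D) := by
  have hirr : ∀ (V : Type) (D : V → V → Prop), Irreflexive D → ∀ x, ¬ D x x := by
    intro V D hD x
    first
      | exact hD x
      | exact hD.irrefl x
  exact ⟨fun V _ D hD v => ⟨adi_delete D (hirr V D hD) v, adi_mono D (hirr V D hD) _⟩,
    fun V _ D hD S => adi_mono D (hirr V D hD) S⟩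
end

section
/- There exists a function g : ℕ → ℕ such that for every finite simple graph G, the degeneracy of G is at most g(ava(G)); that is, every nonempty (induced) subgraph of G has a vertex of degree at most g(ava(G)). -/
open Function

theorem acyc_mono {V : Type} {G : SimpleGraph V} {S T : Set V} (h : S ⊆ T)
    (hT : (G.induce T).IsAcyclic) : (G.induce S).IsAcyclic :=
  hT.embedding (SimpleGraph.induceHomOfLE G h)

theorem acyc_star {V : Type} {G : SimpleGraph V} {B : Set V} (a : V)
    (hB : ∀ u ∈ B, ∀ v ∈ B, ¬ G.Adj u v) : (G.induce ({a} ∪ B)).IsAcyclic := by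
  refine SimpleGraph.IsAcyclic.anti ?_
    (SimpleGraph.isAcyclic_starGraph (⟨a, Or.inl rfl⟩ : ({a} ∪ B : Set V)))
  rintro ⟨u, hu⟩ ⟨v, hv⟩ h
  have h' : G.Adj u v := h
  have hne := h'.ne
  rcases hu with hu | hu <;> rcases hv with hv | hv
  · simp at hu hv; subst hu; subst hv; exact absurd rfl hne
  · simp at hu; subst hu; simp [SimpleGraph.starGraph_adj]; exact fun e => hne (congrArg Subtype.val e)
  · simp at hv; subst hv; simp [SimpleGraph.starGraph_adj]; exact fun e => hne (congrArg Subtype.val e)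
  · exact absurd h' (hB u hu v hv)

open Classical in
theorem acyc_count {V : Type} [Fintype V] {G : SimpleGraph V} (X B : Finset V)
    (hd : Disjoint X B) (h : (G.induce ((X : Set V) ∪ (B : Set V))).IsAcyclic) :
    ∑ a ∈ X, (B.filter (fun b => G.Adj a b)).card ≤ X.card + B.card := by
  rcases isEmpty_or_nonempty ↥((X : Set V) ∪ (B : Set V)) with he | hn
  · have hX : X = ∅ := by
      apply Finset.eq_empty_of_forall_notMem
      intro x hx
      exact he.false ⟨x, Or.inl hx⟩
    simp [hX]
  · have hT : ((⊤ : SimpleGraph ↥((X : Set V) ∪ (B : Set V)))).Connected :=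
      SimpleGraph.connected_top
    obtain ⟨T, hGT, -, hTt⟩ : ∃ T, G.induce ((X : Set V) ∪ (B : Set V)) ≤ T ∧ T ≤ ⊤ ∧ T.IsTree := by
      obtain ⟨T, h1, h2, h3⟩ := hT.exists_isTree_le_of_le_of_isAcyclic le_top h
      exact ⟨T, by assumption, by assumption, by assumption⟩
    have hc := hTt.card_edgeFinset
    have hcard : Fintype.card ↥((X : Set V) ∪ (B : Set V)) = X.card + B.card := by
      rw [← Finset.card_union_of_disjoint hd, ← Fintype.card_coe]
      apply Fintype.card_congr
      exact Equiv.subtypeEquivRight (by simp)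
    rw [← Finset.card_sigma]
    have : (X.sigma (fun a => B.filter (fun b => G.Adj a b))).card ≤ T.edgeFinset.card := by
      refine Finset.card_le_card_of_injOn
        (fun p => if hp : p.1 ∈ ((X : Set V) ∪ (B : Set V)) ∧ p.2 ∈ ((X : Set V) ∪ (B : Set V))
          then s(⟨p.1, hp.1⟩, ⟨p.2, hp.2⟩) else s(Classical.arbitrary _, Classical.arbitrary _)) ?_ ?_
      · rintro ⟨a, b⟩ hp
        simp at hp
        have h1 : a ∈ ((X : Set V) ∪ (B : Set V)) := Or.inl hp.1
        have h2 : b ∈ ((X : Set V) ∪ (B : Set V)) := Or.inr hp.2.1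
        simp only [h1, h2, and_self, dite_true]
        simp only [Finset.mem_coe, SimpleGraph.mem_edgeFinset, SimpleGraph.mem_edgeSet]
        exact hGT hp.2.2
      · rintro ⟨a, b⟩ hp ⟨a', b'⟩ hp' heq
        simp at hp hp'
        have h1 : a ∈ ((X : Set V) ∪ (B : Set V)) := Or.inl hp.1
        have h2 : b ∈ ((X : Set V) ∪ (B : Set V)) := Or.inr hp.2.1
        have h1' : a' ∈ ((X : Set V) ∪ (B : Set V)) := Or.inl hp'.1
        have h2' : b' ∈ ((X : Set V) ∪ (B : Set V)) := Or.inr hp'.2.1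
        simp only [h1, h2, h1', h2', and_self, dite_true] at heq
        rw [Sym2.eq_iff] at heq
        rcases heq with ⟨h3, h4⟩ | ⟨h3, h4⟩
        · simp at h3 h4; subst h3; subst h4; rfl
        · simp at h3 h4; subst h3
          exact absurd hp'.2.1 (Finset.disjoint_left.mp hd hp.1)
    omega

/-- extension of a partial complete coloring -/
theorem exists_complete {V : Type} [Fintype V] (G : SimpleGraph V) {k : ℕ}
    (z : V → Option (Fin k))
    (hz : ∀ i, (G.induce (z ⁻¹' {some i})).IsAcyclic)
    (hc : ∀ i j, i ≠ j → ¬ (G.induce (z ⁻¹' {some i} ∪ z ⁻¹' {some j})).IsAcyclic)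
    (hne : ∀ i, ∃ v, z v = some i) :
    ∃ m, k ≤ m ∧ ∃ c : V → Fin m, IsCompleteArborealColoring G c := by
  classical
  let P : ℕ → Prop := fun m => ∃ c : V → Fin m, IsArborealColoring G c ∧
    ∀ u v, z u = z v → z u ≠ none → c u = c v
  have red : ∀ (κ : Type) [Fintype κ] (c : V → κ), (∀ i, (G.induce (c ⁻¹' {i})).IsAcyclic) →
      (∀ u v, z u = z v → z u ≠ none → c u = c v) → P (Fintype.card κ) := by
    intro κ _ c h1 h2
    refine ⟨fun v => Fintype.equivFin κ (c v), ?_, ?_⟩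
    · intro i
      refine acyc_mono ?_ (h1 ((Fintype.equivFin κ).symm i))
      intro v hv
      simp at hv ⊢
      rw [← hv]; simp
    · intro u v h h'
      simp [h2 u v h h']
  have hex : ∃ m, P m := by
    refine ⟨_, red (V ⊕ Fin k) (fun v => match z v with
      | some i => Sum.inr i
      | none => Sum.inl v) ?_ ?_⟩
    · rintro (w | i)
      · have : Subsingleton ↥((fun v => match z v with
          | some i => Sum.inr i
          | none => Sum.inl v) ⁻¹' {(Sum.inl w : V ⊕ Fin k)}) := by
          constructor
          rintro ⟨a, ha⟩ ⟨b, hb⟩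
          simp at ha hb
          rcases hza : z a with _ | i <;> rcases hzb : z b with _ | j <;> simp_all
        exact SimpleGraph.IsAcyclic.of_subsingleton
      · refine acyc_mono ?_ (hz i)
        intro v hv
        simp at hv ⊢
        rcases hza : z v with _ | j <;> simp_all
    · intro u v h h'
      rcases hza : z u with _ | i
      · exact absurd hza h'
      · have := h ▸ hza
        simp [hza, this]
  obtain ⟨m, ⟨c, hc1, hc2⟩, hmin'⟩ : ∃ m, P m ∧ ∀ n < m, ¬ P n :=
    ⟨Nat.find hex, Nat.find_spec hex, fun n hn => Nat.find_min hex hn⟩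
  have hmin : ∀ j : Fin m, ¬ P (m - 1) := fun j =>
    hmin' _ (by have := j.2; omega)
  have hdrop : ∀ j : Fin m, Fintype.card {x : Fin m // x ≠ j} = m - 1 := by
    intro j
    simp [Fintype.card_subtype_compl]
  refine ⟨m, ?_, c, ?_, hc1, ?_⟩
  · choose v hv using hne
    have : Injective (fun i => c (v i)) := by
      intro i j hij
      by_contra hcon
      refine hc i j hcon (acyc_mono ?_ (hc1 (c (v i))))
      rintro w (hw | hw)
      · simp at hw ⊢
        exact hc2 _ _ (hw.trans (hv _).symm) (by simp [hw])
      · simp at hw ⊢ hij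
        rw [hij]
        exact hc2 _ _ (hw.trans (hv _).symm) (by simp [hw])
    simpa using Fintype.card_le_of_injective _ this
  · intro j
    by_contra hcon
    push Not at hcon
    apply hmin j
    rw [← hdrop j]
    refine red _ (fun v => ⟨c v, hcon v⟩) ?_ ?_
    · intro i
      refine acyc_mono ?_ (hc1 i.1)
      intro v hv
      simp at hv ⊢
      rw [← hv]
    · intro u v h h'
      simp [hc2 u v h h']
  · intro i j hij hac
    apply hmin j
    rw [← hdrop j]
    refine red _ (fun v => if h : c v = j then ⟨i, hij⟩ else ⟨c v, h⟩) ?_ ?_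
    · rintro ⟨l, hl⟩
      by_cases hli : l = i
      · refine acyc_mono ?_ hac
        intro v hv
        simp at hv ⊢
        split_ifs at hv with h
        · exact Or.inr h
        · simp at hv; exact Or.inl (hv.trans hli)
      · refine acyc_mono ?_ (hc1 l)
        intro v hv
        simp at hv ⊢
        split_ifs at hv with h
        · simp at hv; exact absurd hv.symm hli
        · simpa using hv
    · intro u v h h'
      have := hc2 u v h h'
      simp [this]

theorem le_ava {V : Type} [Fintype V] {G : SimpleGraph V} {m : ℕ} (c : V → Fin m)
    (h : IsCompleteArborealColoring G c) : m ≤ avertexArboricity G := by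
  refine le_csSup ⟨Fintype.card V, ?_⟩ ⟨c, h⟩
  rintro k ⟨c, hc⟩
  simpa using Fintype.card_le_of_surjective c hc.1

/-- a proper coloring with `2 * ava` colors -/
theorem proper_col {V : Type} [Fintype V] (G : SimpleGraph V) :
    ∃ p : V → Fin (avertexArboricity G) × Fin 2, ∀ u v, G.Adj u v → p u ≠ p v := by
  obtain ⟨m, -, c, hc⟩ := exists_complete G (k := 0) (fun _ => none) (fun i => i.elim0)
    (fun i => i.elim0) (fun i => i.elim0)
  have hm := le_ava c hc
  have h2 : ∀ i, Nonempty ((G.induce (c ⁻¹' {i})).Coloring (Fin 2)) := fun i =>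
    (hc.2.1 i).colorable_two
  let q := fun i => (h2 i).some
  refine ⟨fun v => (Fin.castLE hm (c v), q (c v) ⟨v, rfl⟩), ?_⟩
  intro u v huv heq
  simp only [Prod.mk.injEq, Fin.castLE_inj] at heq
  obtain ⟨h1, h3⟩ := heq
  have key : ∀ i (hu : c u = i) (hv : c v = i), q i ⟨u, hu⟩ ≠ q i ⟨v, hv⟩ := by
    intro i hu hv
    exact (q i).valid (by exact huv)
  have hgen : ∀ i (hv : c v = i), q (c v) ⟨v, rfl⟩ = q i ⟨v, hv⟩ := by
    intro i hv; subst hv; rfl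
  rw [hgen (c u) h1.symm] at h3
  exact key _ rfl h1.symm h3

/-- averaging -/
theorem rainbow {V : Type} [Fintype V] [DecidableEq V] (k : ℕ) (hk : 0 < k) :
    ∀ (q : ℕ) (N : Finset V), q * k ≤ N.card →
    ∃ r : (V → Fin k) → ℕ, (∀ f i, r f ≤ (N.filter (fun v => f v = i)).card) ∧
      q * k ^ (Fintype.card V) ≤ (∑ f, r f) * k ^ k := by
  intro q
  induction q with
  | zero => exact fun N _ => ⟨fun _ => 0, by simp, by simp⟩
  | succ q ih =>
    intro N hN
    have hkN : k ≤ N.card := by nlinarith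
    obtain ⟨T, hTN, hT⟩ := Finset.exists_subset_card_eq hkN
    obtain ⟨r, hr1, hr2⟩ := ih (N \ T) (by
      rw [Finset.card_sdiff_of_subset hTN, hT]
      have : (q + 1) * k = q * k + k := by ring
      omega)
    let e : T ≃ Fin k := T.equivFinOfCardEq hT
    let g : ∀ v : V, Finset (Fin k) := fun v => if h : v ∈ T then {e ⟨v, h⟩} else Finset.univ
    let R : Finset (V → Fin k) := Fintype.piFinset g
    have hR : R.card * k ^ k = k ^ Fintype.card V := by
      have : ∀ v, (g v).card = if v ∈ T then 1 else k := by
        intro v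
        by_cases h : v ∈ T <;> simp [g, h]
      simp only [R, Fintype.card_piFinset, this]
      rw [Finset.prod_ite]
      simp
      rw [← pow_add, ← Finset.compl_filter, Finset.card_compl]
      simp [hT]
      congr 1
      have := Finset.card_le_univ T
      omega
    refine ⟨fun f => r f + if f ∈ R then 1 else 0, ?_, ?_⟩
    · intro f i
      have h0 := hr1 f i
      have hsplit : (N.filter (fun v => f v = i)).card =
          ((N \ T).filter (fun v => f v = i)).card + (T.filter (fun v => f v = i)).card := by
        rw [← Finset.card_union_of_disjoint, ← Finset.filter_union,
          Finset.sdiff_union_of_subset hTN]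
        exact Finset.disjoint_filter_filter Finset.sdiff_disjoint
      rw [hsplit]
      refine add_le_add h0 ?_
      split_ifs with hf
      · refine Finset.card_pos.mpr ⟨(e.symm i).1, ?_⟩
        simp only [Finset.mem_filter, Finset.coe_mem, true_and]
        have := (Fintype.mem_piFinset.mp hf) (e.symm i).1
        simpa [g] using this
      · exact Nat.zero_le _
    · rw [Finset.sum_add_distrib, add_mul, add_mul]
      refine add_le_add hr2 ?_
      simp [hR]

open Classical in
theorem core {V : Type} [Fintype V] (G : SimpleGraph V) (k : ℕ) (hk : 0 < k)
    (A B : Finset V) (hd : Disjoint A B) (hB : ∀ u ∈ B, ∀ v ∈ B, ¬ G.Adj u v)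
    (hcard : (k ^ (k + 1) + k) * (A.card + B.card) <
      ∑ a ∈ A, (B.filter (fun b => G.Adj a b)).card) :
    k ≤ avertexArboricity G := by
  -- choose the coloring of B
  have hr := fun a : V => rainbow k hk ((B.filter (fun b => G.Adj a b)).card / k)
    (B.filter (fun b => G.Adj a b)) (Nat.div_mul_le_self _ _)
  choose r hr1 hr2 using hr
  obtain ⟨f, hf⟩ : ∃ f : V → Fin k, A.card + B.card < ∑ a ∈ A, r a f := by
    by_contra hcon
    push Not at hcon
    have h1 : ∑ a ∈ A, ((B.filter (fun b => G.Adj a b)).card / k * k ^ Fintype.card V) ≤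
        ∑ a ∈ A, (∑ f, r a f) * k ^ k := Finset.sum_le_sum (fun a _ => hr2 a)
    rw [← Finset.sum_mul, ← Finset.sum_mul, Finset.sum_comm] at h1
    have h2 : ∑ f, ∑ a ∈ A, r a f ≤ k ^ Fintype.card V * (A.card + B.card) := by
      refine (Finset.sum_le_sum (fun f _ => hcon f)).trans ?_
      simp
    have h3 : (∑ a ∈ A, (B.filter (fun b => G.Adj a b)).card / k) ≤ (A.card + B.card) * k ^ k := by
      have hp : 0 < k ^ Fintype.card V := by positivity
      refine Nat.le_of_mul_le_mul_right ?_ hp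
      calc _ ≤ _ := h1
        _ ≤ _ := Nat.mul_le_mul_right _ h2
        _ = _ := by ring
    have h4 : ∑ a ∈ A, (B.filter (fun b => G.Adj a b)).card ≤
        ∑ a ∈ A, (k * ((B.filter (fun b => G.Adj a b)).card / k) + k) := by
      refine Finset.sum_le_sum (fun a _ => ?_)
      have := Nat.div_add_mod (B.filter (fun b => G.Adj a b)).card k
      have := Nat.mod_lt (B.filter (fun b => G.Adj a b)).card hk
      omega
    rw [Finset.sum_add_distrib, ← Finset.mul_sum] at h4
    simp only [Finset.sum_const, smul_eq_mul] at h4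
    have h5 := Nat.mul_le_mul_left k h3
    have h6 : k * ((A.card + B.card) * k ^ k) = k ^ (k + 1) * (A.card + B.card) := by ring
    nlinarith
  let X : (V → Fin (k + 1)) → Fin k → Finset V := fun φ i => A.filter (fun a => φ a = i.castSucc)
  let Y : Fin k → Finset V := fun i => B.filter (fun b => f b = i)
  let s : Set (V → Fin (k + 1)) :=
    {φ | ∀ i, (G.induce ((X φ i : Set V) ∪ (Y i : Set V))).IsAcyclic}
  have hYind : ∀ i, ∀ u ∈ (Y i : Set V), ∀ v ∈ (Y i : Set V), ¬ G.Adj u v := by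
    intro i u hu v hv
    simp [Y] at hu hv
    exact hB u hu.1 v hv.1
  have hs : s.Nonempty := by
    refine ⟨fun _ => Fin.last k, fun i => ?_⟩
    have : X (fun _ => Fin.last k) i = ∅ := by
      simp [X, (Fin.castSucc_lt_last i).ne']
    rw [this]
    have := (hk)
    by_cases hV : Nonempty V
    · obtain ⟨a⟩ := hV
      refine acyc_mono ?_ (acyc_star a (hYind i))
      simp
    · have : IsEmpty V := not_nonempty_iff.mp hV
      exact SimpleGraph.IsAcyclic.of_subsingleton
  obtain ⟨φ, hφ, hmin⟩ := Set.exists_min_image s (fun φ => ∑ v, (φ v : ℕ)) (Set.toFinite s) hs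
  -- moving a vertex down creates a cycle
  have hmove : ∀ a ∈ A, ∀ i : Fin k, i.castSucc < φ a →
      ¬ (G.induce ({a} ∪ ((X φ i : Set V) ∪ (Y i : Set V)))).IsAcyclic := by
    intro a ha i hi hac
    have hmem : Function.update φ a i.castSucc ∈ s := by
      intro j
      by_cases hj : j = i
      · subst hj
        refine acyc_mono ?_ hac
        rintro v (hv | hv)
        · by_cases hva : v = a
          · exact Or.inl hva
          · right; left
            simpa [X, hva, Function.update_of_ne] using hv
        · exact Or.inr (Or.inr hv)
      · refine acyc_mono ?_ (hφ j)
        rintro v (hv | hv)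
        · left
          by_cases hva : v = a
          · subst hva
            simp [X] at hv
            exact absurd hv.2.symm hj
          · simpa [X, hva, Function.update_of_ne] using hv
        · exact Or.inr hv
    have := hmin _ hmem
    refine absurd this (not_le.mpr ?_)
    refine Finset.sum_lt_sum (fun v _ => ?_) ⟨a, Finset.mem_univ _, ?_⟩
    · by_cases hva : v = a
      · subst hva; simpa using Fin.le_def.mp hi.le
      · simp [hva]
    · simpa using Fin.lt_def.mp hi
  -- leftover vertex
  obtain ⟨w, hwA, hw⟩ : ∃ w ∈ A, φ w = Fin.last k := by
    by_contra hcon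
    push Not at hcon
    have h1 : ∑ i : Fin k, ∑ a ∈ X φ i, ((Y i).filter (fun b => G.Adj a b)).card ≤
        ∑ i : Fin k, ((X φ i).card + (Y i).card) := by
      refine Finset.sum_le_sum (fun i _ => acyc_count _ _ ?_ (hφ i))
      exact Finset.disjoint_filter_filter hd
    have h2 : ∑ i : Fin k, ∑ a ∈ X φ i, r a f ≤
        ∑ i : Fin k, ∑ a ∈ X φ i, ((Y i).filter (fun b => G.Adj a b)).card := by
      refine Finset.sum_le_sum (fun i _ => Finset.sum_le_sum (fun a _ => ?_))
      refine (hr1 a f i).trans (le_of_eq ?_)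
      simp only [Y, Finset.filter_filter]
      congr 1
      ext v
      simp only [Finset.mem_filter]
      tauto
    have hlt : ∀ a ∈ A, ∃ i : Fin k, φ a = i.castSucc := by
      intro a ha
      obtain ⟨i, hi⟩ := Fin.exists_castSucc_eq.mpr (hcon a ha)
      exact ⟨i, hi.symm⟩
    have hA : A = Finset.univ.biUnion (X φ) := by
      ext a
      simp only [Finset.mem_biUnion, Finset.mem_univ, true_and, X, Finset.mem_filter]
      constructor
      · intro ha
        obtain ⟨i, hi⟩ := hlt a ha
        exact ⟨i, ha, hi⟩
      · rintro ⟨i, ha, -⟩; exact ha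
    have hdis : Set.PairwiseDisjoint (↑(Finset.univ : Finset (Fin k))) (X φ) := by
      intro i _ j _ hij
      refine Finset.disjoint_left.mpr ?_
      intro a ha ha'
      simp only [X, Finset.mem_filter] at ha ha'
      exact hij (Fin.castSucc_injective _ (ha.2.symm.trans ha'.2))
    have h3 : ∑ i : Fin k, ∑ a ∈ X φ i, r a f = ∑ a ∈ A, r a f := by
      conv_rhs => rw [hA]
      rw [Finset.sum_biUnion hdis]
    have h4 : ∑ i : Fin k, (X φ i).card = A.card := by
      conv_rhs => rw [hA]
      rw [Finset.card_biUnion hdis]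
    have h5 : ∑ i : Fin k, (Y i).card = B.card :=
      (Finset.card_eq_sum_card_fiberwise (fun _ _ => Finset.mem_coe.mpr (Finset.mem_univ _))).symm
    rw [Finset.sum_add_distrib] at h1
    omega
  have hXne : ∀ i, ∃ a, a ∈ X φ i := by
    intro i
    by_contra hcon
    push Not at hcon
    refine hmove w hwA i (by rw [hw]; exact Fin.castSucc_lt_last i)
      (acyc_mono ?_ (acyc_star w (hYind i)))
    rintro v (hv | hv | hv)
    · exact Or.inl hv
    · exact absurd hv (hcon v)
    · exact Or.inr hv
  let z : V → Option (Fin k) := fun v => if v ∈ B then some (f v) else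
    if h : v ∈ A ∧ φ v ≠ Fin.last k then some ((φ v).castPred h.2) else none
  have hz : ∀ i, z ⁻¹' {some i} = (X φ i : Set V) ∪ (Y i : Set V) := by
    intro i
    ext v
    simp only [Set.mem_preimage, Set.mem_singleton_iff, z, X, Y, Set.mem_union, Finset.mem_coe,
      Finset.mem_filter]
    by_cases hvB : v ∈ B
    · have hvA : v ∉ A := fun h => Finset.disjoint_left.mp hd h hvB
      simp [hvB, hvA]
    · by_cases hvA : v ∈ A
      · by_cases hl : φ v = Fin.last k
        · simp [hvB, hl, (Fin.castSucc_lt_last i).ne']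
        · simp [hvB, hl, hvA, Fin.castPred_eq_iff_eq_castSucc]
      · simp [hvB, hvA]
  have hlt : ∀ i j : Fin k, i < j →
      ¬ (G.induce (z ⁻¹' {some i} ∪ z ⁻¹' {some j})).IsAcyclic := by
    intro i j hij hac
    obtain ⟨a, ha⟩ := hXne j
    have ha' := Finset.mem_filter.mp ha
    refine hmove a ha'.1 i (by rw [ha'.2]; exact hij) (acyc_mono ?_ hac)
    rw [hz, hz]
    rintro v (hv | hv)
    · right; left
      rw [Set.mem_singleton_iff.mp hv]; exact ha
    · exact Or.inl hv
  obtain ⟨m, hkm, c, hc⟩ := exists_complete G z (fun i => by rw [hz]; exact hφ i)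
    (fun i j hij => by
      rcases lt_or_gt_of_ne hij with h | h
      · exact hlt i j h
      · rw [Set.union_comm]; exact hlt j i h)
    (fun i => by
      obtain ⟨a, ha⟩ := hXne i
      have : a ∈ z ⁻¹' {some i} := by rw [hz]; exact Or.inl ha
      exact ⟨a, this⟩)
  exact hkm.trans (le_ava c hc)

/-- there is a function `g : ℕ → ℕ` such that every finite simple graph `G`
has degeneracy at most `g(ava(G))`: every nonempty induced subgraph has a vertex of degree
at most `g(ava(G))`. -/
theorem degeneracy_bounded_by_ava :
    ∃ g : ℕ → ℕ, ∀ (V : Type) [Fintype V] (G : SimpleGraph V) (S : Set V),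
      S.Nonempty → ∃ v ∈ S, {w | w ∈ S ∧ G.Adj v w}.ncard ≤ g (avertexArboricity G) := by
  classical
  refine ⟨fun a => ((a + 1) ^ (a + 1 + 1) + (a + 1)) * (2 * (a * 2)), ?_⟩
  intro V _ G S hS
  by_contra hcon
  push Not at hcon
  obtain ⟨a, ha⟩ : ∃ a, a = avertexArboricity G := ⟨_, rfl⟩
  obtain ⟨p, hp⟩ := proper_col G
  rw [← ha] at hcon
  revert p
  rw [← ha]
  intro p hp
  set M := (a + 1) ^ (a + 1 + 1) + (a + 1) with hM
  let T : Finset V := S.toFinset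
  let C : Fin a × Fin 2 → Finset V := fun i => T.filter (fun v => p v = i)
  have hTne : T.Nonempty := by simpa [T] using hS
  have hdeg : ∀ v ∈ T, M * (2 * (a * 2)) < (T.filter (fun w => G.Adj v w)).card := by
    intro v hv
    have := hcon v (by simpa [T] using hv)
    rw [Set.ncard_eq_toFinset_card'] at this
    have he : T.filter (fun w => G.Adj v w) = {w | w ∈ S ∧ G.Adj v w}.toFinset := by
      ext w; simp [T]
    rw [he]; exact this
  have hpair : ∀ i j, ∑ v ∈ C i, ((C j).filter (fun w => G.Adj v w)).card ≤
      M * ((C i).card + (C j).card) := by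
    intro i j
    by_contra hlt
    push Not at hlt
    by_cases hij : i = j
    · subst hij
      have : ∑ v ∈ C i, ((C i).filter (fun w => G.Adj v w)).card = 0 := by
        refine Finset.sum_eq_zero (fun v hv => ?_)
        rw [Finset.card_eq_zero, Finset.filter_eq_empty_iff]
        intro w hw hvw
        simp only [C, Finset.mem_filter] at hv hw
        exact hp v w hvw (hv.2.trans hw.2.symm)
      omega
    · have := core G (a + 1) (Nat.succ_pos _) (C i) (C j) ?_ ?_ hlt
      · omega
      · refine Finset.disjoint_left.mpr (fun v hv hv' => ?_)
        simp only [C, Finset.mem_filter] at hv hv'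
        exact hij (hv.2.symm.trans hv'.2)
      · intro u hu v hv huv
        simp only [C, Finset.mem_filter] at hu hv
        exact hp u v huv (hu.2.trans hv.2.symm)
  have hcardC : ∑ i, (C i).card = T.card :=
    (Finset.card_eq_sum_card_fiberwise (fun _ _ => Finset.mem_coe.mpr (Finset.mem_univ _))).symm
  have htot : ∑ v ∈ T, (T.filter (fun w => G.Adj v w)).card =
      ∑ i, ∑ j, ∑ v ∈ C i, ((C j).filter (fun w => G.Adj v w)).card := by
    have h1 : ∀ v, (T.filter (fun w => G.Adj v w)).card =
        ∑ j, ((C j).filter (fun w => G.Adj v w)).card := by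
      intro v
      rw [Finset.card_eq_sum_card_fiberwise (f := p) (t := Finset.univ)
        (fun _ _ => Finset.mem_coe.mpr (Finset.mem_univ _))]
      refine Finset.sum_congr rfl (fun j _ => ?_)
      congr 1
      ext w
      simp only [C, Finset.mem_filter]
      tauto
    rw [← Finset.sum_fiberwise T p]
    refine Finset.sum_congr rfl (fun i _ => ?_)
    rw [Finset.sum_comm]
    exact Finset.sum_congr rfl (fun v _ => h1 v)
  have hub : ∑ i, ∑ j, ∑ v ∈ C i, ((C j).filter (fun w => G.Adj v w)).card ≤
      M * (2 * (a * 2)) * T.card := by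
    calc _ ≤ ∑ i, ∑ j, M * ((C i).card + (C j).card) :=
          Finset.sum_le_sum (fun i _ => Finset.sum_le_sum (fun j _ => hpair i j))
      _ = _ := by
          simp only [← Finset.mul_sum, Finset.sum_add_distrib, hcardC, Finset.sum_const,
            smul_eq_mul, Finset.card_univ, Fintype.card_prod, Fintype.card_fin]
          ring
  have hlb : ∑ v ∈ T, M * (2 * (a * 2)) < ∑ v ∈ T, (T.filter (fun w => G.Adj v w)).card :=
    Finset.sum_lt_sum_of_nonempty hTne hdeg
  rw [htot] at hlb
  simp only [Finset.sum_const, smul_eq_mul] at hlb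
  nlinarith
end
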